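/- arXiv:2601.21930 — 6 statements merged into one kernel-verified Lean document; each statement's English description precedes it below -/
import Mathlib

section
/- Let z∞ ∈ [0,1) and Γ, γ₊ ∈ ℝ. Then σ(ℓ,z) ≥ 0 for every ℓ ≥ 0 and z ∈ ℝ with ℓ² + z² < 1 if and only if γ₊ ≥ 0 and (2Γ ≥ γ₊ or z∞²·γ₊² ≤ 4·Γ·(γ₊ − Γ)). (This is the paper's Theorem 1: non-negativity of the map entropy production on the Bloch ball is equivalent to P-divisibility of the phase-covariant dynamics.) -/
/-!
Write `w = zinf`, `g = γp`, `r² = ℓ² + z²`, `s = √(1 - w²)`, so that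
`σ = F(r) (Γ (r² - z²) - g (w - z) z) + g (w - z) w F(w)`.

*Necessity.* On the axis `ℓ = 0` one has `σ = g (w - z) (artanh w - artanh z)`, which forces `0 ≤ g`
because `artanh` is strictly increasing. If both alternatives of the condition fail, the quadratic
`(g - Γ) z² - g w z + Γ` is negative at its vertex `c = g w / (2 (g - Γ)) ∈ [0, 1)`. It is the limit
of the coefficient of `F(r)` in `σ` as `r → 1` with `z = c` fixed, and `F(r) → ∞`, so `σ → -∞`.

*Sufficiency.* The condition gives `2 Γ ≥ g (1 - s)`, and `σ` is nondecreasing in `Γ`, so it is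
enough to treat `2 Γ = g (1 - s)`. Then `2 σ / g` is the quadratic in `z`
`(1 + s) f z² - 2 w (f + k) z + (1 - s) r² f + 2 w² k`, with `f = F(r)` and `k = F(w)`, to be shown
nonnegative for `|z| ≤ r` (`quad_nonneg`). If its vertex is at least `r`, its minimum is the value at
`z = r`, namely `2 (r - w) (r f - w k) ≥ 0`. Otherwise its discriminant is nonpositive, which amounts
to `(1 - r²) - 2 s q + q² ≤ 0` for `q = k / f`. This convex function of `q` is controlled at the two
ends of the range of `q`, and that range comes from the facts that `F` is increasing and
`(1 - x²) F(x)` is decreasing on `(0, 1)`.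
-/

/-- Inverse hyperbolic tangent: arctanh r = (1/2) log((1+r)/(1-r)). -/
noncomputable def artanh (r : ℝ) : ℝ := (1/2) * Real.log ((1 + r) / (1 - r))

/-- F(r) := arctanh(r)/r with the convention F(0) = 1. -/
noncomputable def F (r : ℝ) : ℝ := if r = 0 then 1 else artanh r / r

/-- Fixed-point entropy production of the phase-covariant qubit dynamics,
extended to the whole Bloch ball, at the point with Bloch coordinates (ℓ, z). -/
noncomputable def sigmaFP (Γ γp zinf ℓ z : ℝ) : ℝ :=
  Γ * ℓ ^ 2 * F (Real.sqrt (ℓ ^ 2 + z ^ 2)) +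
    γp * (zinf - z) * (artanh zinf - z * F (Real.sqrt (ℓ ^ 2 + z ^ 2)))

open Filter Topology

lemma le_artanh {x : ℝ} (h0 : 0 ≤ x) (h1 : x < 1) : x ≤ artanh x := by
  simpa [artanh] using Real.sum_range_le_log_div h0 h1 1

lemma artanh_le {x : ℝ} (h0 : 0 ≤ x) (h1 : x < 1) : artanh x ≤ x / (1 - x ^ 2) := by
  simpa [artanh] using Real.log_div_le_sum_range_add h0 h1 0

lemma artanh_lt {x y : ℝ} (h0 : 0 ≤ x) (hxy : x < y) (h1 : y < 1) : artanh x < artanh y := by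
  unfold artanh
  have : (1 + x) / (1 - x) < (1 + y) / (1 - y) := by
    rw [div_lt_div_iff₀ (by linarith) (by linarith)]; nlinarith
  have := Real.log_lt_log (div_pos (by linarith) (by linarith)) this
  linarith

lemma hasDerivAt_artanh {x : ℝ} (h0 : 0 < x) (h1 : x < 1) :
    HasDerivAt artanh (1 / (1 - x ^ 2)) x := by
  have e1 : (1 - x) ≠ 0 := by linarith
  have e2 : (1 + x) ≠ 0 := by linarith
  have e3 : (1 - x ^ 2) ≠ 0 := by nlinarith
  have h := ((((hasDerivAt_id x).const_add 1).div ((hasDerivAt_id x).const_sub 1) e1).log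
    (div_ne_zero e2 e1)).const_mul (1 / 2)
  refine h.congr_deriv ?_
  simp only [id, Pi.div_apply]
  rw [show 1 - x ^ 2 = (1 - x) * (1 + x) by ring]
  field_simp
  ring

lemma F_of_pos {x : ℝ} (h0 : 0 < x) : F x = artanh x / x := by
  simp [F, h0.ne']

lemma mul_F {x : ℝ} (h0 : 0 < x) : x * F x = artanh x := by
  rw [F_of_pos h0]; field_simp

lemma F_pos {x : ℝ} (h0 : 0 < x) (h1 : x < 1) : 0 < F x := by
  rw [F_of_pos h0]
  exact div_pos (h0.trans_le (le_artanh h0.le h1)) h0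

lemma F_mono {x y : ℝ} (h0 : 0 < x) (hxy : x ≤ y) (h1 : y < 1) : F x ≤ F y := by
  have hd : ∀ t ∈ Set.Ioo (0 : ℝ) 1, HasDerivAt (fun t => artanh t / t)
      ((1 / (1 - t ^ 2) * t - artanh t * 1) / t ^ 2) t := fun t ht =>
    (hasDerivAt_artanh ht.1 ht.2).div (hasDerivAt_id t) ht.1.ne'
  have hm : MonotoneOn (fun t => artanh t / t) (Set.Ioo (0 : ℝ) 1) := by
    refine monotoneOn_of_deriv_nonneg (convex_Ioo 0 1)
      (fun t ht => (hd t ht).continuousAt.continuousWithinAt)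
      (fun t ht => (hd t (interior_subset ht)).differentiableAt.differentiableWithinAt) ?_
    intro t ht
    have ht := interior_subset ht
    rw [(hd t ht).deriv]
    have := artanh_le ht.1.le ht.2
    have : 1 / (1 - t ^ 2) * t = t / (1 - t ^ 2) := by ring
    exact div_nonneg (by linarith) (by positivity)
  rw [F_of_pos h0, F_of_pos (h0.trans_le hxy)]
  exact hm ⟨h0, by linarith⟩ ⟨by linarith, h1⟩ hxy

/-- `(1 - x²) F(x)` is nonincreasing on `(0, 1)`: the sign of its derivative is that of
`x / (1 + x²) - artanh x`, which is at most `x - artanh x`. -/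
lemma one_sub_sq_mul_F_anti {x y : ℝ} (h0 : 0 < x) (hxy : x ≤ y) (h1 : y < 1) :
    (1 - y ^ 2) * F y ≤ (1 - x ^ 2) * F x := by
  have hd : ∀ t ∈ Set.Ioo (0 : ℝ) 1, HasDerivAt (fun t => (t⁻¹ - t) * artanh t)
      ((-(t ^ 2)⁻¹ - 1) * artanh t + (t⁻¹ - t) * (1 / (1 - t ^ 2))) t := fun t ht =>
    ((hasDerivAt_inv ht.1.ne').sub (hasDerivAt_id t)).mul (hasDerivAt_artanh ht.1 ht.2)
  have hm : AntitoneOn (fun t => (t⁻¹ - t) * artanh t) (Set.Ioo (0 : ℝ) 1) := by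
    refine antitoneOn_of_deriv_nonpos (convex_Ioo 0 1)
      (fun t ht => (hd t ht).continuousAt.continuousWithinAt)
      (fun t ht => (hd t (interior_subset ht)).differentiableAt.differentiableWithinAt) ?_
    intro t ht
    have ht := interior_subset ht
    rw [(hd t ht).deriv]
    have ha := le_artanh ht.1.le ht.2
    have ht0 : 0 < t := ht.1
    have e3 : (1 - t ^ 2) ≠ 0 := by nlinarith [ht.1, ht.2]
    have e : (t⁻¹ - t) * (1 / (1 - t ^ 2)) = (t ^ 2)⁻¹ * t := by field_simp
    rw [e]
    have : 0 ≤ (t ^ 2)⁻¹ * (artanh t - t) :=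
      mul_nonneg (by positivity) (by linarith)
    nlinarith
  have h := hm ⟨h0, by linarith⟩ ⟨by linarith, h1⟩ hxy
  have key : ∀ t : ℝ, 0 < t → (1 - t ^ 2) * F t = (t⁻¹ - t) * artanh t := by
    intro t ht; rw [F_of_pos ht]; field_simp
  rw [key x h0, key y (h0.trans_le hxy)]
  exact h

lemma tendsto_artanh : Tendsto artanh (𝓝[<] 1) atTop := by
  have h1 : Tendsto (fun x : ℝ => 1 - x) (𝓝[<] 1) (𝓝[>] 0) := by
    refine tendsto_nhdsWithin_iff.2 ⟨?_, ?_⟩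
    · have : Tendsto (fun x : ℝ => 1 - x) (𝓝 1) (𝓝 (1 - 1)) :=
        (continuous_const.sub continuous_id).tendsto 1
      rw [sub_self] at this
      exact this.mono_left nhdsWithin_le_nhds
    · filter_upwards [self_mem_nhdsWithin] with x hx
      simpa using hx
  have h2 : Tendsto (fun x : ℝ => 1 + x) (𝓝[<] 1) (𝓝 (1 + 1)) :=
    ((continuous_const.add continuous_id).tendsto 1).mono_left nhdsWithin_le_nhds
  have h3 := h2.pos_mul_atTop (by norm_num) (tendsto_inv_nhdsGT_zero.comp h1)
  exact (Real.tendsto_log_atTop.comp h3).const_mul_atTop (by norm_num)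

/-- A monic quadratic that is nonpositive at `a` and `b` is nonpositive between them. -/
lemma quad_nonpos_between {a b q s t : ℝ} (haq : a ≤ q) (hqb : q ≤ b)
    (ha : t - 2 * s * a + a ^ 2 ≤ 0) (hb : t - 2 * s * b + b ^ 2 ≤ 0) :
    t - 2 * s * q + q ^ 2 ≤ 0 := by
  rcases haq.eq_or_lt with rfl | h
  · exact ha
  have hab : 0 < b - a := by linarith
  have : (b - a) * (t - 2 * s * q + q ^ 2) ≤ 0 := by
    have e : (b - a) * (t - 2 * s * q + q ^ 2) = (b - q) * (t - 2 * s * a + a ^ 2)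
      + (q - a) * (t - 2 * s * b + b ^ 2) - (b - a) * ((q - a) * (b - q)) := by ring
    rw [e]
    have h1 := mul_nonneg (sub_nonneg.2 hqb) (neg_nonneg.2 ha)
    have h2 := mul_nonneg (sub_nonneg.2 haq) (neg_nonneg.2 hb)
    have h3 := mul_nonneg hab.le (mul_nonneg (sub_nonneg.2 haq) (sub_nonneg.2 hqb))
    linarith
  by_contra! hc
  linarith [mul_pos hab hc]

/-- The discriminant bound, in terms of `q = F(w) / F(r)`. The last hypothesis says that the vertex
of the quadratic lies to the left of `r`. -/
lemma disc_nonpos {w r s q : ℝ} (hw : 0 < w) (hs0 : 0 < s) (hs : s ^ 2 = 1 - w ^ 2)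
    (hwr : w < r) (hr : r < 1) (hq1 : q ≤ 1) (hq : (1 - r ^ 2) ≤ s ^ 2 * q)
    (hv : w * (1 + q) < r * (1 + s)) : (1 - r ^ 2) - 2 * s * q + q ^ 2 ≤ 0 := by
  have hs1 : s ≤ 1 := by nlinarith
  have ht : 0 < 1 - r ^ 2 := by nlinarith
  have hts : 1 - r ^ 2 ≤ s ^ 2 := by nlinarith
  have hq0 : 0 ≤ q := by
    by_contra! h
    nlinarith [sq_nonneg s]
  have haq : (1 - r ^ 2) / s ≤ q := by
    rw [div_le_iff₀ hs0]
    nlinarith [mul_nonneg (mul_nonneg hq0 hs0.le) (sub_nonneg.2 hs1)]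
  have ha : (1 - r ^ 2) - 2 * s * ((1 - r ^ 2) / s) + ((1 - r ^ 2) / s) ^ 2 ≤ 0 := by
    have e : (1 - r ^ 2) - 2 * s * ((1 - r ^ 2) / s) + ((1 - r ^ 2) / s) ^ 2
        = (1 - r ^ 2) * ((1 - r ^ 2) - s ^ 2) / s ^ 2 := by field_simp; ring
    rw [e]
    exact div_nonpos_of_nonpos_of_nonneg
      (mul_nonpos_of_nonneg_of_nonpos ht.le (by linarith)) (by positivity)
  -- The upper end of the range of `q` is `r (1 + s) / w - 1` if `r s ≤ w`, and `1` otherwise.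
  rcases le_total (r * s) w with h | h
  · refine quad_nonpos_between haq (b := r * (1 + s) / w - 1) ?_ ha ?_
    · rw [le_sub_iff_add_le, le_div_iff₀ hw]; linarith
    · have e : (1 - r ^ 2) - 2 * s * (r * (1 + s) / w - 1) + (r * (1 + s) / w - 1) ^ 2
          = 2 * (1 + s) * ((r - w) * (r * s - w)) / w ^ 2 := by
        field_simp
        linear_combination (-r ^ 2) * hs
      rw [e]
      exact div_nonpos_of_nonpos_of_nonneg (mul_nonpos_of_nonneg_of_nonpos (by linarith)
        (mul_nonpos_of_nonneg_of_nonpos (by linarith) (by linarith))) (by positivity)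
  · refine quad_nonpos_between haq hq1 ha ?_
    have h1 : w ^ 2 ≤ (r * s) ^ 2 := by gcongr
    have h2 : 0 ≤ (1 - r ^ 2) * s ^ 2 := by positivity
    -- From `w ≤ r s`: `1 - r² ≤ 2 - 1 / s²`, and `2 - 1 / s² ≤ 2 s - 1`.
    have h3 : s ^ 2 * (2 - r ^ 2 - 2 * s) ≤ 0 := by
      nlinarith [mul_nonneg (sq_nonneg (1 - s)) (by linarith : 0 ≤ 1 + 2 * s)]
    by_contra! hc
    nlinarith [mul_pos (pow_pos hs0 2) (by linarith : 0 < 2 - r ^ 2 - 2 * s)]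

lemma quad_nonneg {w r s z : ℝ} (hw : 0 < w) (hw1 : w < 1) (hs0 : 0 < s) (hs : s ^ 2 = 1 - w ^ 2)
    (hr0 : 0 < r) (hr : r < 1) (hz : z ≤ r) :
    0 ≤ (1 + s) * F r * z ^ 2 - 2 * w * (F r + F w) * z + (1 - s) * r ^ 2 * F r
      + 2 * w ^ 2 * F w := by
  have hf := F_pos hr0 hr
  have hk := F_pos hw hw1
  have hs1 : s ≤ 1 := by nlinarith
  rcases le_or_gt (r * (1 + s) * F r) (w * (F r + F w)) with h | h
  · have h1 : 0 ≤ (r - w) * (r * F r - w * F w) := by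
      rw [mul_F hr0, mul_F hw]
      rcases lt_trichotomy r w with h | h | h
      · exact mul_nonneg_of_nonpos_of_nonpos (by linarith)
          (by linarith [artanh_lt hr0.le h hw1])
      · simp [h]
      · exact mul_nonneg (by linarith) (by linarith [artanh_lt hw.le h hr])
    have h2 : 0 ≤ (r - z) * (2 * (w * (F r + F w)) - (1 + s) * F r * (z + r)) := by
      refine mul_nonneg (by linarith) ?_
      nlinarith [mul_nonneg (mul_nonneg (by linarith : 0 ≤ 1 + s) hf.le) (sub_nonneg.2 hz)]
    nlinarith
  · have hwr : w < r := by
      by_contra! hc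
      have h1 := F_mono hr0 hc hw1
      have h2 : r * (1 + s) ≤ w * 2 := by nlinarith
      nlinarith [mul_le_mul_of_nonneg_right h2 hf.le, mul_le_mul_of_nonneg_left h1 hw.le]
    have hm := F_mono hw hwr.le hr
    have ha := one_sub_sq_mul_F_anti hw hwr.le hr
    have hd := disc_nonpos (q := F w / F r) hw hs0 hs hwr hr ((div_le_one hf).2 hm)
      (by rw [hs, ← mul_div_assoc, le_div_iff₀ hf]; exact ha)
      (by
        have e : w * (1 + F w / F r) = w * (F r + F w) / F r := by field_simp
        rw [e, div_lt_iff₀ hf]; exact h)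
    have hdisc : (1 - r ^ 2) * F r ^ 2 - 2 * s * (F r * F w) + F w ^ 2 ≤ 0 := by
      have e : (1 - r ^ 2) * F r ^ 2 - 2 * s * (F r * F w) + F w ^ 2
          = F r ^ 2 * ((1 - r ^ 2) - 2 * s * (F w / F r) + (F w / F r) ^ 2) := by field_simp
      rw [e]
      exact mul_nonpos_of_nonneg_of_nonpos (by positivity) hd
    have hA : 0 < (1 + s) * F r := by positivity
    generalize F r = f at *
    generalize F w = k at *
    -- Completing the square; `w² = (1 - s) (1 + s)` turns the remainder into the discriminant.
    have e : (1 + s) * f * ((1 + s) * f * z ^ 2 - 2 * w * (f + k) * z + (1 - s) * r ^ 2 * f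
        + 2 * w ^ 2 * k) = ((1 + s) * f * z - w * (f + k)) ^ 2
        - w ^ 2 * ((1 - r ^ 2) * f ^ 2 - 2 * s * (f * k) + k ^ 2) := by
      linear_combination (-(r ^ 2 * f ^ 2)) * hs
    by_contra! hc
    have := mul_neg_of_pos_of_neg hA hc
    rw [e] at this
    nlinarith [sq_nonneg ((1 + s) * f * z - w * (f + k)),
      mul_nonneg (sq_nonneg w) (neg_nonneg.2 hdisc)]

/-- The condition forces `Γ` to be at least the smaller root of `4 Γ (g - Γ) = w² g²`. -/
lemma rate_lower_bound {w Γ g s : ℝ} (hs0 : 0 ≤ s) (hs : s ^ 2 = 1 - w ^ 2) (hg : 0 ≤ g)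
    (h : g ≤ 2 * Γ ∨ w ^ 2 * g ^ 2 ≤ 4 * Γ * (g - Γ)) : g * (1 - s) ≤ 2 * Γ := by
  rcases h with h | h
  · nlinarith [mul_nonneg hg hs0]
  · have h1 : (g - 2 * Γ) ^ 2 ≤ (g * s) ^ 2 := by rw [mul_pow, hs]; nlinarith
    have := abs_le_of_sq_le_sq h1 (mul_nonneg hg hs0)
    linarith [(abs_le.1 this).2]

lemma sigmaFP_nonneg {w Γ g ℓ z : ℝ} (hw : 0 ≤ w) (hw1 : w < 1) (hg : 0 ≤ g)
    (h : g ≤ 2 * Γ ∨ w ^ 2 * g ^ 2 ≤ 4 * Γ * (g - Γ)) (hlz : ℓ ^ 2 + z ^ 2 < 1) :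
    0 ≤ sigmaFP Γ g w ℓ z := by
  have hpos : 0 < 1 - w ^ 2 := by nlinarith
  obtain ⟨s, hs0, hs⟩ : ∃ s : ℝ, 0 < s ∧ s ^ 2 = 1 - w ^ 2 :=
    ⟨√(1 - w ^ 2), Real.sqrt_pos.2 hpos, Real.sq_sqrt hpos.le⟩
  have hs1 : s ≤ 1 := by nlinarith
  have hΓ := rate_lower_bound hs0.le hs hg h
  unfold sigmaFP
  have hr2 : √(ℓ ^ 2 + z ^ 2) ^ 2 = ℓ ^ 2 + z ^ 2 := Real.sq_sqrt (by positivity)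
  have hr1 : √(ℓ ^ 2 + z ^ 2) < 1 := by
    rw [Real.sqrt_lt' one_pos]; simpa using hlz
  have hzr : z ≤ √(ℓ ^ 2 + z ^ 2) := Real.le_sqrt_of_sq_le (by nlinarith [sq_nonneg ℓ])
  have hr0 := Real.sqrt_nonneg (ℓ ^ 2 + z ^ 2)
  generalize √(ℓ ^ 2 + z ^ 2) = r at *
  rcases hr0.eq_or_lt with rfl | hr0
  · have hl : ℓ = 0 := by nlinarith [sq_nonneg z, sq_nonneg ℓ]
    have hz : z = 0 := by nlinarith [sq_nonneg z, sq_nonneg ℓ]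
    subst hl hz
    have := hw.trans (le_artanh hw hw1)
    have : 0 ≤ g * w * artanh w := by positivity
    simpa using this
  have hf := F_pos hr0 hr1
  have hgap : 0 ≤ (2 * Γ - g * (1 - s)) * (ℓ ^ 2 * F r) :=
    mul_nonneg (by linarith) (by positivity)
  rcases hw.eq_or_lt with rfl | hw
  · have h0 : artanh 0 = 0 := by simp [artanh]
    have : 0 ≤ g * (1 - s) * (ℓ ^ 2 * F r) :=
      mul_nonneg (mul_nonneg hg (by linarith)) (by positivity)
    have : 0 ≤ g * (z ^ 2 * F r) := by positivity
    rw [h0]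
    nlinarith
  · have hQ := mul_nonneg hg (quad_nonneg hw hw1 hs0 hs hr0 hr1 hzr)
    rw [← mul_F hw]
    rw [hr2] at hQ
    nlinarith

lemma rate_nonneg {w Γ g : ℝ} (hw : 0 ≤ w) (hw1 : w < 1)
    (h : ∀ ℓ z : ℝ, 0 ≤ ℓ → ℓ ^ 2 + z ^ 2 < 1 → 0 ≤ sigmaFP Γ g w ℓ z) : 0 ≤ g := by
  obtain ⟨r, h1, h2⟩ := exists_between hw1
  have hr0 : 0 < r := by linarith
  have := h 0 r le_rfl (by nlinarith)
  unfold sigmaFP at this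
  rw [show (0 : ℝ) ^ 2 + r ^ 2 = r ^ 2 by ring, Real.sqrt_sq hr0.le, mul_F hr0] at this
  have hp : 0 < (w - r) * (artanh w - artanh r) :=
    mul_pos_of_neg_of_neg (by linarith) (by linarith [artanh_lt hw h1 h2])
  by_contra! hc
  nlinarith [mul_neg_of_neg_of_pos hc hp]

/-- Approaching the Bloch sphere at fixed height `c`, the divergence of `F` leaves only the
coefficient of `F`, which is therefore nonnegative in the limit. -/
lemma boundary_nonneg {w Γ g c : ℝ} (hc0 : 0 ≤ c) (hc1 : c < 1)
    (h : ∀ ℓ z : ℝ, 0 ≤ ℓ → ℓ ^ 2 + z ^ 2 < 1 → 0 ≤ sigmaFP Γ g w ℓ z) :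
    0 ≤ Γ * (1 ^ 2 - c ^ 2) - g * (w - c) * c := by
  by_contra! hneg
  have hco : Tendsto (fun r : ℝ => Γ * (r ^ 2 - c ^ 2) - g * (w - c) * c) (𝓝[<] 1)
      (𝓝 (Γ * (1 ^ 2 - c ^ 2) - g * (w - c) * c)) := by
    have : Continuous (fun r : ℝ => Γ * (r ^ 2 - c ^ 2) - g * (w - c) * c) := by fun_prop
    exact (this.tendsto 1).mono_left nhdsWithin_le_nhds
  have hC : Tendsto (fun r : ℝ => g * (w - c) * artanh w * r) (𝓝[<] 1)
      (𝓝 (g * (w - c) * artanh w * 1)) := by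
    have : Continuous (fun r : ℝ => g * (w - c) * artanh w * r) := by fun_prop
    exact (this.tendsto 1).mono_left nhdsWithin_le_nhds
  have hT := (tendsto_artanh.atTop_mul_neg hneg hco).atBot_add hC
  have hev : ∀ᶠ r : ℝ in 𝓝[<] 1, c < r :=
    nhdsWithin_le_nhds (lt_mem_nhds hc1)
  obtain ⟨r, ⟨hr, hcr⟩, hr1⟩ :=
    (((hT.eventually_lt_atBot 0).and hev).and self_mem_nhdsWithin).exists
  have hr1 : r < 1 := hr1
  have hr0 : 0 < r := by linarith
  have hl : √(r ^ 2 - c ^ 2) ^ 2 = r ^ 2 - c ^ 2 := Real.sq_sqrt (by nlinarith)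
  have hσ := h √(r ^ 2 - c ^ 2) c (Real.sqrt_nonneg _) (by rw [hl]; nlinarith)
  unfold sigmaFP at hσ
  rw [hl, sub_add_cancel, Real.sqrt_sq hr0.le] at hσ
  have := mul_nonneg hr0.le hσ
  rw [← mul_F hr0] at hr
  nlinarith

/-- **Theorem 1 of the paper.** Non-negativity of the map entropy production on the
Bloch ball is equivalent to P-divisibility of the phase-covariant dynamics. -/
theorem map_entropy_nonneg_iff_P_divisible
    (zinf Γ γp : ℝ) (hz0 : 0 ≤ zinf) (hz1 : zinf < 1) :
    (∀ ℓ z : ℝ, 0 ≤ ℓ → ℓ ^ 2 + z ^ 2 < 1 → 0 ≤ sigmaFP Γ γp zinf ℓ z) ↔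
      (0 ≤ γp ∧ (γp ≤ 2 * Γ ∨ zinf ^ 2 * γp ^ 2 ≤ 4 * Γ * (γp - Γ))) := by
  constructor
  · intro h
    have hg := rate_nonneg hz0 hz1 h
    refine ⟨hg, ?_⟩
    by_contra! hc
    obtain ⟨hc1, hc2⟩ := hc
    have hd : 0 < γp - Γ := by linarith
    have hv0 : 0 ≤ γp * zinf / (2 * (γp - Γ)) := by positivity
    have hv1 : γp * zinf / (2 * (γp - Γ)) < 1 := by
      rw [div_lt_one (by linarith)]; nlinarith
    have hb := boundary_nonneg hv0 hv1 h
    have e : Γ * (1 ^ 2 - (γp * zinf / (2 * (γp - Γ))) ^ 2)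
        - γp * (zinf - γp * zinf / (2 * (γp - Γ))) * (γp * zinf / (2 * (γp - Γ)))
        = (4 * Γ * (γp - Γ) - zinf ^ 2 * γp ^ 2) / (4 * (γp - Γ)) := by
      field_simp; ring
    rw [e] at hb
    exact absurd hb (not_le.2 (div_neg_of_neg_of_pos (by linarith) (by linarith)))
  · rintro ⟨hg, h⟩ ℓ z _ hlz
    exact sigmaFP_nonneg hz0 hz1 hg h hlz
end

section
/- Let z∞ ∈ [0,1). For all ℓ ≥ 0 and z ∈ ℝ with r := √(ℓ² + z²) < 1, one has (ℓ²/2)·F(r) + (z − z∞)·z·F(r) − (z − z∞)·arctanh(z∞) ≥ 0. (In the paper's notation this is the inequality A + B + C ≥ 0, valid at every point of the Bloch ball.) -/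
lemma artanh_mono_of_nonneg {x y : ℝ} (hx : 0 ≤ x) (hxy : x ≤ y) (hy : y < 1) :
    artanh x ≤ artanh y := by
  unfold artanh
  have h1 : 0 < 1 - x := by linarith
  have h2 : 0 < 1 - y := by linarith
  have h : (1 + x) / (1 - x) ≤ (1 + y) / (1 - y) := by
    rw [div_le_div_iff₀ h1 h2]
    nlinarith
  have := Real.log_le_log (by positivity) h
  linarith

lemma artanh_at_zero : artanh 0 = 0 := by
  simp [artanh]

lemma mul_F_eq_artanh (r : ℝ) : r * F r = artanh r := by
  unfold F
  split_ifs with h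
  · simp [h, artanh_at_zero]
  · field_simp

lemma F_pos_of_nonneg {r : ℝ} (h0 : 0 ≤ r) (h1 : r < 1) : 0 < F r := by
  unfold F
  split_ifs with h
  · exact one_pos
  · have hr : 0 < r := lt_of_le_of_ne h0 (Ne.symm h)
    have hlog : 0 < Real.log ((1 + r) / (1 - r)) := by
      apply Real.log_pos
      rw [lt_div_iff₀ (by linarith)]
      linarith
    unfold artanh
    positivity

/-- The inequality A + B + C ≥ 0, valid at every point of the Bloch ball. -/
theorem A_add_B_add_C_nonneg
    (zinf : ℝ) (hz0 : 0 ≤ zinf) (hz1 : zinf < 1)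
    (ℓ z : ℝ) (hℓ : 0 ≤ ℓ) (hr : Real.sqrt (ℓ ^ 2 + z ^ 2) < 1) :
    0 ≤ ℓ ^ 2 / 2 * F (Real.sqrt (ℓ ^ 2 + z ^ 2))
        + (z - zinf) * z * F (Real.sqrt (ℓ ^ 2 + z ^ 2))
        - (z - zinf) * artanh zinf := by
  have hr0 : 0 ≤ Real.sqrt (ℓ ^ 2 + z ^ 2) := Real.sqrt_nonneg _
  have hsq : Real.sqrt (ℓ ^ 2 + z ^ 2) ^ 2 = ℓ ^ 2 + z ^ 2 := Real.sq_sqrt (by positivity)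
  generalize Real.sqrt (ℓ ^ 2 + z ^ 2) = r at *
  have hG := F_pos_of_nonneg hr0 hr
  have hrG := mul_F_eq_artanh r
  have hA : 0 ≤ artanh zinf := by
    simpa [artanh_at_zero] using artanh_mono_of_nonneg le_rfl hz0 hz1
  have hzr : z ≤ r := abs_le_of_sq_le_sq' (by nlinarith [sq_nonneg ℓ]) hr0 |>.2
  have hend : 0 ≤ (r - zinf) * (r * F r - artanh zinf) := by
    rw [hrG]
    rcases le_total zinf r with h | h
    · exact mul_nonneg (by linarith) (by linarith [artanh_mono_of_nonneg hz0 h hr])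
    · exact mul_nonneg_of_nonpos_of_nonpos (by linarith)
        (by linarith [artanh_mono_of_nonneg hr0 h hz1])
  have hℓ2 : ℓ ^ 2 = r ^ 2 - z ^ 2 := by linarith
  rw [hℓ2]
  generalize F r = G at *
  generalize artanh zinf = A at *
  rcases le_total (r * G) (zinf * G + A) with h | h
  · have hslope : (z + r) * G / 2 ≤ zinf * G + A := by nlinarith
    have := mul_nonneg (sub_nonneg.2 hzr) (sub_nonneg.2 hslope)
    linarith
  · have haG : 0 ≤ zinf * G := by positivity
    have hvertex : (zinf * G) ^ 2 + A ^ 2 ≤ (r * G) ^ 2 := by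
      nlinarith [mul_nonneg haG hA]
    refine nonneg_of_mul_nonneg_right (a := 2 * G) ?_ (by positivity)
    nlinarith [sq_nonneg (z * G - (zinf * G + A))]
end

section
/- Let Γ ≥ 0, γ₊ > 0 and z∞ > 0. For every z with 0 ≤ z < z∞, the quadratic P(z) := −Γ·z∞² + γ₊·z∞·z + (Γ − γ₊)·z² satisfies P(z) ≥ 0 if and only if 2Γ < γ₊ and z ≥ z∞·Γ/(γ₊ − Γ). (Since ℓ̂(z)² + z² − z∞² = P(z)/Γ when Γ > 0, this characterizes exactly when the turning radius r̂(z) := √(ℓ̂(z)² + z²), with ℓ̂(z) := √(γ₊·(z∞ − z)·z/Γ), satisfies r̂(z) ≥ z∞.) -/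
/-- Characterization of when the turning radius reaches z∞: for 0 ≤ z < z∞ the
quadratic P(z) = −Γz∞² + γ₊z∞z + (Γ − γ₊)z² is nonnegative iff 2Γ < γ₊ and
z ≥ z∞Γ/(γ₊ − Γ). -/
theorem critical_quadratic_nonneg_iff
    (Γ γp zinf : ℝ) (hΓ : 0 ≤ Γ) (hγ : 0 < γp) (hzi : 0 < zinf)
    (z : ℝ) (hz0 : 0 ≤ z) (hz : z < zinf) :
    0 ≤ -Γ * zinf ^ 2 + γp * zinf * z + (Γ - γp) * z ^ 2 ↔
      (2 * Γ < γp ∧ zinf * Γ / (γp - Γ) ≤ z) := by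
  -- `z = zinf` is a root of the quadratic, so it factors; the factor `zinf - z` is positive.
  have hfac : -Γ * zinf ^ 2 + γp * zinf * z + (Γ - γp) * z ^ 2
      = (zinf - z) * ((γp - Γ) * z - Γ * zinf) := by ring
  rw [hfac, mul_nonneg_iff_of_pos_left (sub_pos.mpr hz)]
  constructor
  · intro h
    have h2 : 2 * Γ < γp := by
      by_contra! hc
      -- Here `Γ > 0` and `(γp - Γ) * z ≤ Γ * z < Γ * zinf`.
      have hΓ' : 0 < Γ := by linarith
      nlinarith [mul_nonneg (sub_nonneg.mpr hc) hz0, mul_pos hΓ' (sub_pos.mpr hz)]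
    refine ⟨h2, ?_⟩
    rw [div_le_iff₀ (by linarith)]
    linarith
  · rintro ⟨h2, h⟩
    rw [div_le_iff₀ (by linarith)] at h
    linarith
end

section
/- Let z∞ ∈ [0,1) and Γ, γ₊ ∈ ℝ. If σ(ℓ,z) ≥ 0 for every ℓ ≥ 0 and z ∈ ℝ with ℓ² + z² < 1, then Γ ≥ 0 and γ₊ ≥ 0. (Nonnegativity of the map entropy production forces nonnegativity of both damping rates, obtained by evaluating σ on the plane z = z∞ and on the z-axis.) -/
lemma artanh_strictMono_of_lt_one {x y : ℝ} (hx : 0 ≤ x) (hxy : x < y) (hy : y < 1) :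
    artanh x < artanh y := by
  unfold artanh
  have h1 : 0 < 1 - x := by linarith
  have h2 : 0 < 1 - y := by linarith
  have h3 : (1 + x) / (1 - x) < (1 + y) / (1 - y) := by
    rw [div_lt_div_iff₀ h1 h2]
    nlinarith
  have h4 := Real.log_lt_log (by positivity) h3
  linarith

lemma F_pos_s11 {r : ℝ} (hr0 : 0 < r) (hr1 : r < 1) : 0 < F r := by
  have h := artanh_strictMono_of_lt_one le_rfl hr0 hr1
  have h0 : artanh 0 = 0 := by simp [artanh]
  rw [h0] at h
  rw [F, if_neg hr0.ne']
  positivity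

/-- Nonnegativity of the map entropy production forces nonnegativity of both
damping rates. -/
theorem rates_nonneg_of_sigmaFP_nonneg
    (zinf Γ γp : ℝ) (hz0 : 0 ≤ zinf) (hz1 : zinf < 1)
    (h : ∀ ℓ z : ℝ, 0 ≤ ℓ → ℓ ^ 2 + z ^ 2 < 1 → 0 ≤ sigmaFP Γ γp zinf ℓ z) :
    0 ≤ Γ ∧ 0 ≤ γp := by
  constructor
  · obtain ⟨ℓ, hℓ⟩ : ∃ ℓ : ℝ, ℓ = (1 - zinf) / 2 := ⟨_, rfl⟩
    have hpos : 0 < ℓ := by linarith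
    have hlt : ℓ ^ 2 + zinf ^ 2 < 1 := by subst hℓ; nlinarith
    have hσ := h ℓ zinf hpos.le hlt
    have hF : 0 < F (Real.sqrt (ℓ ^ 2 + zinf ^ 2)) :=
      F_pos_s11 (Real.sqrt_pos.2 (by positivity))
        ((Real.sqrt_lt' one_pos).2 (by linarith))
    simp only [sigmaFP, sub_self, mul_zero, zero_mul, add_zero, mul_assoc] at hσ
    exact nonneg_of_mul_nonneg_left hσ (by positivity)
  · obtain ⟨z, hz⟩ : ∃ z : ℝ, z = (1 + zinf) / 2 := ⟨_, rfl⟩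
    have hzpos : 0 < z := by linarith
    have hlt : zinf < z := by linarith
    have hz1' : z < 1 := by linarith
    have hσ := h 0 z le_rfl (by nlinarith)
    have hs : Real.sqrt ((0 : ℝ) ^ 2 + z ^ 2) = z := by
      rw [zero_pow two_ne_zero, zero_add, Real.sqrt_sq hzpos.le]
    have hzF : z * F z = artanh z := by
      rw [F, if_neg hzpos.ne', mul_div_cancel₀ _ hzpos.ne']
    rw [sigmaFP, hs, hzF, zero_pow two_ne_zero, mul_zero, zero_mul, zero_add, mul_assoc] at hσ
    have hmono := artanh_strictMono_of_lt_one hz0 hlt hz1'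
    exact nonneg_of_mul_nonneg_left hσ (mul_pos_of_neg_of_neg (by linarith) (by linarith))
end

section
/- Let z∞ ∈ [0,1), Γ, γ₊ ∈ ℝ, and fix z ∈ (−1,1) such that −Γ·(1 − z²) + γ₊·(z∞ − z)·z > 0 (i.e. the radial velocity ṙ at the pure-state boundary r = 1 is positive at height z). Then σ(ℓ,z) tends to −∞ as ℓ tends to √(1 − z²) from below. (This shows that failure of P-divisibility produces arbitrarily negative entropy production near the boundary of the Bloch ball.) -/
open Filter Topology

lemma tendsto_artanh_atTop : Tendsto artanh (𝓝[<] (1 : ℝ)) atTop := by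
  have hden : Tendsto (fun r : ℝ => 1 - r) (𝓝[<] (1 : ℝ)) (𝓝[>] 0) := by
    refine tendsto_nhdsWithin_iff.2 ⟨?_, ?_⟩
    · have : Tendsto (fun r : ℝ => 1 - r) (𝓝 1) (𝓝 (1 - 1)) := by
        apply Continuous.tendsto
        fun_prop
      rw [sub_self] at this
      exact this.mono_left nhdsWithin_le_nhds
    · filter_upwards [self_mem_nhdsWithin] with r hr
      exact sub_pos.2 (Set.mem_Iio.1 hr)
  have hnum : Tendsto (fun r : ℝ => 1 + r) (𝓝[<] (1 : ℝ)) (𝓝 (1 + 1)) := by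
    refine Tendsto.mono_left (Continuous.tendsto ?_ 1) nhdsWithin_le_nhds
    fun_prop
  have hquot : Tendsto (fun r : ℝ => (1 + r) / (1 - r)) (𝓝[<] (1 : ℝ)) atTop :=
    hnum.pos_mul_atTop (by norm_num) (tendsto_inv_nhdsGT_zero.comp hden)
  exact (Real.tendsto_log_atTop.comp hquot).const_mul_atTop (by norm_num)

lemma tendsto_F_atTop : Tendsto F (𝓝[<] (1 : ℝ)) atTop := by
  have hinv : Tendsto (fun r : ℝ => r⁻¹) (𝓝[<] (1 : ℝ)) (𝓝 1⁻¹) :=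
    (tendsto_inv₀ one_ne_zero).mono_left nhdsWithin_le_nhds
  refine (tendsto_artanh_atTop.atTop_mul_pos (by norm_num) hinv).congr' ?_
  filter_upwards [nhdsWithin_le_nhds (eventually_ne_nhds (one_ne_zero (α := ℝ)))] with r hr
  simp [F, hr, div_eq_mul_inv]

/-- The Bloch radius increases to `1`, staying strictly below it, as `ℓ ↑ √(1 - z²)`. -/
lemma tendsto_radius {z : ℝ} (hz : 0 < 1 - z ^ 2) :
    Tendsto (fun ℓ : ℝ => Real.sqrt (ℓ ^ 2 + z ^ 2))
      (𝓝[<] (Real.sqrt (1 - z ^ 2))) (𝓝[<] 1) := by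
  refine tendsto_nhdsWithin_iff.2 ⟨?_, ?_⟩
  · have h : Tendsto (fun ℓ : ℝ => Real.sqrt (ℓ ^ 2 + z ^ 2)) (𝓝 (Real.sqrt (1 - z ^ 2)))
        (𝓝 (Real.sqrt ((Real.sqrt (1 - z ^ 2)) ^ 2 + z ^ 2))) :=
      Continuous.tendsto (by fun_prop) _
    rw [Real.sq_sqrt hz.le, sub_add_cancel, Real.sqrt_one] at h
    exact h.mono_left nhdsWithin_le_nhds
  · -- Positivity of `ℓ` near the limit is what lets `ℓ < √(1 - z²)` be squared.
    filter_upwards [self_mem_nhdsWithin,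
      nhdsWithin_le_nhds (eventually_gt_nhds (Real.sqrt_pos.2 hz))] with ℓ hlt hℓ
    have hsq : ℓ ^ 2 < 1 - z ^ 2 := (Real.lt_sqrt (le_of_lt hℓ)).1 hlt
    exact (Real.sqrt_lt' one_pos).2 (by linarith)

/-- If the radial velocity at the pure-state boundary is positive at height z, then
the entropy production tends to −∞ as ℓ approaches √(1 − z²) from below. -/
theorem sigmaFP_tendsto_atBot_of_not_P_divisible
    (zinf Γ γp : ℝ) (hz0 : 0 ≤ zinf) (hz1 : zinf < 1)
    (z : ℝ) (hzm : -1 < z) (hzp : z < 1)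
    (hpos : 0 < -Γ * (1 - z ^ 2) + γp * (zinf - z) * z) :
    Filter.Tendsto (fun ℓ : ℝ => sigmaFP Γ γp zinf ℓ z)
      (nhdsWithin (Real.sqrt (1 - z ^ 2)) (Set.Iio (Real.sqrt (1 - z ^ 2))))
      Filter.atBot := by
  have hz : 0 < 1 - z ^ 2 := by nlinarith
  have hcoef : Tendsto (fun ℓ : ℝ => Γ * ℓ ^ 2 - γp * (zinf - z) * z)
      (𝓝[<] (Real.sqrt (1 - z ^ 2))) (𝓝 (Γ * (1 - z ^ 2) - γp * (zinf - z) * z)) := by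
    have h : Tendsto (fun ℓ : ℝ => Γ * ℓ ^ 2 - γp * (zinf - z) * z) (𝓝 (Real.sqrt (1 - z ^ 2)))
        (𝓝 (Γ * (Real.sqrt (1 - z ^ 2)) ^ 2 - γp * (zinf - z) * z)) :=
      Continuous.tendsto (by fun_prop) _
    rw [Real.sq_sqrt hz.le] at h
    exact h.mono_left nhdsWithin_le_nhds
  have hmain := hcoef.neg_mul_atTop (by linarith) (tendsto_F_atTop.comp (tendsto_radius hz))
  refine (tendsto_atBot_add_const_right _ (γp * (zinf - z) * artanh zinf) hmain).congr ?_
  intro ℓ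
  simp only [sigmaFP, Function.comp_apply]
  ring
end

section
/- Let z∞ ∈ (0,1) and let Γ, γ₊ be real numbers with 0 ≤ Γ < γ₊ and 4·Γ·(γ₊ − Γ) < γ₊²·z∞² (i.e. the dynamics is not P-divisible). Then the function G(r) := Γ·r·arctanh(r) + γ₊·z∞·arctanh(z∞) − γ₊²·(r·arctanh(z∞) + z∞·arctanh(r))²/(4·r·arctanh(r)·(γ₊ − Γ)) tends to −∞ as r → 1⁻. (G(r) is the minimum over the polar angle of the extended fixed-point entropy production on the sphere of Bloch radius r, so its divergence to −∞ shows that the map entropy production is negative when P-divisibility fails.) -/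
theorem artanh_tendsto_atTop :
    Filter.Tendsto artanh (nhdsWithin 1 (Set.Iio 1)) Filter.atTop := by
  unfold artanh
  refine Filter.Tendsto.const_mul_atTop (by norm_num) (Real.tendsto_log_atTop.comp ?_)
  have hnum : Filter.Tendsto (fun r : ℝ => 1 + r) (nhdsWithin 1 (Set.Iio 1)) (nhds 2) := by
    have h : Filter.Tendsto (fun r : ℝ => 1 + r) (nhds 1) (nhds (1 + 1)) :=
      (continuous_const.add continuous_id).tendsto 1
    norm_num at h
    exact h.mono_left nhdsWithin_le_nhds
  have hden : Filter.Tendsto (fun r : ℝ => 1 - r) (nhdsWithin 1 (Set.Iio 1))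
      (nhdsWithin 0 (Set.Ioi 0)) := by
    refine tendsto_nhdsWithin_iff.2 ⟨?_, ?_⟩
    · have h : Filter.Tendsto (fun r : ℝ => 1 - r) (nhds 1) (nhds (1 - 1)) :=
        (continuous_const.sub continuous_id).tendsto 1
      rw [sub_self] at h
      exact h.mono_left nhdsWithin_le_nhds
    · filter_upwards [self_mem_nhdsWithin] with r hr
      exact sub_pos.2 (Set.mem_Iio.1 hr)
  simpa only [div_eq_mul_inv, Function.comp_apply] using
    hnum.pos_mul_atTop (by norm_num) (tendsto_inv_nhdsGT_zero.comp hden)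

/-- When P-divisibility fails (4Γ(γ₊ − Γ) < γ₊²z∞² with 0 ≤ Γ < γ₊), the minimum over
the polar angle of the extended fixed-point entropy production on the Bloch sphere of
radius r tends to −∞ as r → 1⁻. -/
theorem min_entropy_production_tendsto_atBot
    (zinf Γ γp : ℝ) (h1 : 0 < zinf) (h2 : zinf < 1)
    (hΓ : 0 ≤ Γ) (hΓγ : Γ < γp)
    (hnP : 4 * Γ * (γp - Γ) < γp ^ 2 * zinf ^ 2) :
    Filter.Tendsto
      (fun r : ℝ => Γ * r * artanh r + γp * zinf * artanh zinf -
        γp ^ 2 * (r * artanh zinf + zinf * artanh r) ^ 2 /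
          (4 * r * artanh r * (γp - Γ)))
      (nhdsWithin 1 (Set.Iio 1)) Filter.atBot := by
  have hd : 0 < γp - Γ := sub_pos.2 hΓγ
  set a := artanh zinf
  have hc : Γ - γp ^ 2 * zinf ^ 2 / (4 * (γp - Γ)) < 0 := by
    rw [sub_neg, lt_div_iff₀ (by positivity)]
    linarith
  have hlim : Filter.Tendsto
      (fun r : ℝ => (γp * zinf * a - γp ^ 2 * (2 * a * zinf) / (4 * (γp - Γ))) +
        (Γ - γp ^ 2 * zinf ^ 2 / (4 * (γp - Γ))) * artanh r)
      (nhdsWithin 1 (Set.Iio 1)) Filter.atBot :=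
    Filter.tendsto_atBot_add_const_left _ _ (artanh_tendsto_atTop.const_mul_atTop_of_neg hc)
  refine Filter.tendsto_atBot_mono' _ ?_ hlim
  filter_upwards [artanh_tendsto_atTop.eventually_gt_atTop 0, self_mem_nhdsWithin,
    nhdsWithin_le_nhds (lt_mem_nhds (zero_lt_one : (0 : ℝ) < 1))] with r hA hr1 hr0
  have hr1 : r < 1 := hr1
  set A := artanh r
  have hΓA : Γ * r * A ≤ Γ * A := by
    nlinarith [mul_nonneg (mul_nonneg hΓ hA.le) (sub_pos.2 hr1).le]
  have hsq : (2 * a * zinf + zinf ^ 2 * A) * (r * A) ≤ (r * a + zinf * A) ^ 2 := by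
    nlinarith [sq_nonneg (r * a),
      mul_nonneg (mul_nonneg (sq_nonneg zinf) (sq_nonneg A)) (sub_pos.2 hr1).le]
  have hquot : γp ^ 2 * (2 * a * zinf + zinf ^ 2 * A) / (4 * (γp - Γ)) ≤
      γp ^ 2 * (r * a + zinf * A) ^ 2 / (4 * r * A * (γp - Γ)) := by
    rw [div_le_div_iff₀ (by positivity) (by positivity)]
    have := mul_le_mul_of_nonneg_left hsq
      (show 0 ≤ γp ^ 2 * (4 * (γp - Γ)) by positivity)
    linarith
  have hsplit : γp ^ 2 * (2 * a * zinf + zinf ^ 2 * A) / (4 * (γp - Γ)) =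
      γp ^ 2 * (2 * a * zinf) / (4 * (γp - Γ)) +
        γp ^ 2 * zinf ^ 2 / (4 * (γp - Γ)) * A := by
    ring
  linarith
end
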